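/- For every vertex v of the graph B_7, the induced subgraph of B_7 obtained by deleting v is word-representable; consequently, since B_7 itself is not word-representable, B_7 is a minimal non-word-representable graph. -/

import Mathlib

/-- Two distinct letters `x` and `y` alternate in the word `w` if the subsequence of `w`
formed by all occurrences of `x` and `y` has no two equal consecutive letters. -/
def Alternates {V : Type*} [DecidableEq V] (w : List V) (x y : V) : Prop :=
  (w.filter (fun z => decide (z = x ∨ z = y))).Chain' (· ≠ ·)

/-- A graph `G` is word-representable if there is a word over its vertex set, in which
every vertex occurs, such that two distinct vertices alternate in the word iff
they are adjacent in `G`. -/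
def WordRepresentable {V : Type*} [DecidableEq V] (G : SimpleGraph V) : Prop :=
  ∃ w : List V, (∀ v : V, v ∈ w) ∧
    ∀ x y : V, x ≠ y → (Alternates w x y ↔ G.Adj x y)

/-- The graph `B₇` on vertices `{1,…,9}` (vertex `i` of the paper is `i - 1` here):
cliques on `{1,2,3,4}` and on `{5,6,7,8,9}` together with the edges
`{1,6},{2,6},{1,7},{3,7},{2,8},{4,8},{3,9},{4,9}`. -/
def B7 : SimpleGraph (Fin 9) :=
  SimpleGraph.fromRel (fun a b => (a, b) ∈
    ([(0,1),(0,2),(0,3),(1,2),(1,3),(2,3),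
      (4,5),(4,6),(4,7),(4,8),(5,6),(5,7),(5,8),(6,7),(6,8),(7,8),
      (0,5),(1,5),(0,6),(2,6),(1,7),(3,7),(2,8),(3,8)] : List (Fin 9 × Fin 9)))

/-- Prefix counts: `x` is always level with `y` or one ahead of it. -/
def Ahead (w : List (Fin 9)) (x y : Fin 9) : Prop :=
  ∀ n, (w.take n).count y ≤ (w.take n).count x ∧ (w.take n).count x ≤ (w.take n).count y + 1

/-- Prefix counts: `x` is never behind `y`. -/
def Lead (w : List (Fin 9)) (x y : Fin 9) : Prop :=
  ∀ n, (w.take n).count y ≤ (w.take n).count x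

theorem isChain_cons_filter_iff (w : List (Fin 9)) : ∀ (x y : Fin 9), x ≠ y →
    ((y :: w.filter (fun z => decide (z = x ∨ z = y))).IsChain (· ≠ ·) ↔ Ahead w x y) := by
  induction w with
  | nil => intro x y h; simp [Ahead]
  | cons z t ih =>
    intro x y h
    have hsplit : Ahead (z :: t) x y ↔
        ∀ n, ((z :: t.take n).count y ≤ (z :: t.take n).count x ∧
          (z :: t.take n).count x ≤ (z :: t.take n).count y + 1) := by
      constructor
      · intro H n
        simpa using H (n + 1)
      · intro H n
        cases n with
        | zero => simp
        | succ n => simpa using H n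
    rw [hsplit]
    by_cases hx : z = x
    · subst hx
      have e : (fun u => decide (u = z ∨ u = y)) = (fun u => decide (u = y ∨ u = z)) := by
        funext u; simp [or_comm]
      have := ih y z h.symm
      rw [e, List.filter_cons_of_pos (by simp), List.isChain_cons_cons, this]
      simp only [Ahead, List.count_cons_self, List.count_cons_of_ne h]
      constructor
      · rintro ⟨-, H⟩ n
        have := H n
        omega
      · intro H
        refine ⟨h.symm, fun n => ?_⟩
        have := H n
        omega
    · by_cases hy : z = y
      · subst hy
        rw [List.filter_cons_of_pos (by simp), List.isChain_cons_cons]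
        constructor
        · rintro ⟨H, -⟩; exact absurd rfl H
        · intro H
          have := (H 0).1
          simp [List.count_cons_of_ne hx] at this
      · rw [List.filter_cons_of_neg (by simp [hx, hy]), ih x y h]
        simp only [Ahead, List.count_cons_of_ne hx, List.count_cons_of_ne hy]

theorem alternates_iff (w : List (Fin 9)) (x y : Fin 9) (h : x ≠ y) :
    Alternates w x y ↔ Ahead w x y ∨ Ahead w y x := by
  rw [← isChain_cons_filter_iff w x y h, ← isChain_cons_filter_iff w y x h.symm]
  have e : (fun u => decide (u = y ∨ u = x)) = (fun u => decide (u = x ∨ u = y)) := by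
    funext u; simp [or_comm]
  rw [e]
  change (w.filter (fun z => decide (z = x ∨ z = y))).IsChain (· ≠ ·) ↔ _
  have hm : ∀ z ∈ w.filter (fun z => decide (z = x ∨ z = y)), z = x ∨ z = y := by
    intro z hz
    simpa using (List.mem_filter.1 hz).2
  revert hm
  generalize w.filter (fun z => decide (z = x ∨ z = y)) = f
  intro hm
  cases f with
  | nil => simp
  | cons z t =>
    rw [List.isChain_cons_cons, List.isChain_cons_cons]
    rcases hm z (by simp) with rfl | rfl
    · simp [h.symm]
    · simp [h]

theorem Lead.antisymm {w : List (Fin 9)} (hw : ∀ v, v ∈ w) {x y : Fin 9}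
    (h1 : Lead w x y) (h2 : Lead w y x) : x = y := by
  by_contra hne
  obtain ⟨n, hn, rfl⟩ := List.mem_iff_getElem.1 (hw x)
  have a1 := h1 n
  have a2 := h2 n
  have b1 := h1 (n + 1)
  have b2 := h2 (n + 1)
  rw [List.take_succ_eq_append_getElem hn, List.count_append, List.count_append] at b1 b2
  simp [hne] at b1 b2
  omega

theorem Lead.trans {w : List (Fin 9)} {x y z : Fin 9}
    (h1 : Lead w x y) (h2 : Lead w y z) : Lead w x z := fun n => (h2 n).trans (h1 n)

theorem Lead.refl (w : List (Fin 9)) (x : Fin 9) : Lead w x x := fun _ => le_rfl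

theorem Ahead.lead {w : List (Fin 9)} {x y : Fin 9} (h : Ahead w x y) : Lead w x y :=
  fun n => (h n).1

/-- No shortcuts: the semi-transitivity of the orientation given by a word. -/
theorem Ahead.shortcut {w : List (Fin 9)} {u i j k : Fin 9} (h : Ahead w u k)
    (h1 : Lead w u i) (h2 : Lead w i j) (h3 : Lead w j k) : Ahead w i j := by
  intro n
  have := h n
  have := h1 n
  have := h2 n
  have := h3 n
  omega

/-- If `a` is joined to `p`, `q` but to neither `x` nor `x'`, with `p, q, x` and `p, q, x'`
cliques, and `x` lies between `p` and `q`, then so does `x'`. -/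
theorem between_of_between {w : List (Fin 9)} (hw : ∀ v, v ∈ w)
    {G : SimpleGraph (Fin 9)} (hG : ∀ x y, x ≠ y → (Ahead w x y ∨ Ahead w y x ↔ G.Adj x y))
    (a p q x x' : Fin 9) (hap : G.Adj a p) (haq : G.Adj a q) (hpq : G.Adj p q)
    (hx'p : G.Adj x' p) (hx'q : G.Adj x' q) (hax : a ≠ x ∧ ¬ G.Adj a x)
    (hax' : a ≠ x' ∧ ¬ G.Adj a x')
    (h1 : Lead w p x) (h2 : Lead w x q) : Lead w p x' ∧ Lead w x' q := by
  have non : ∀ z, a ≠ z ∧ ¬ G.Adj a z → ¬ Ahead w a z ∧ ¬ Ahead w z a := by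
    intro z hz
    have := mt (hG a z hz.1).1 hz.2
    exact not_or.1 this
  have nx := non x hax
  have nx' := non x' hax'
  have pq := h1.trans h2
  have npq : ¬ Lead w q p := fun h => hpq.ne (pq.antisymm hw h)
  rcases (hG a p hap.ne).2 hap with ap | pa
  · rcases (hG a q haq.ne).2 haq with aq | qa
    · exact absurd (aq.shortcut (Lead.refl w a) (ap.lead.trans h1) h2) nx.1
    · exact absurd (qa.lead.trans ap.lead) npq
  · rcases (hG a q haq.ne).2 haq with aq | qa
    · constructor
      · rcases (hG x' p hx'p.ne).2 hx'p with h | h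
        · rcases (hG x' q hx'q.ne).2 hx'q with h' | h'
          · exact absurd (h'.shortcut (Lead.refl w x') (h.lead.trans pa.lead) aq.lead) nx'.2
          · exact absurd (h'.lead.trans h.lead) npq
        · exact h.lead
      · rcases (hG x' q hx'q.ne).2 hx'q with h | h
        · exact h.lead
        · rcases (hG x' p hx'p.ne).2 hx'p with h' | h'
          · exact absurd (h.lead.trans h'.lead) npq
          · exact absurd (h'.shortcut pa.lead (aq.lead.trans h.lead) (Lead.refl w x')) nx'.1
    · exact absurd (pa.shortcut h1 (h2.trans qa.lead) (Lead.refl w a)) nx.2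

instance : DecidableRel B7.Adj := fun a b => by
  unfold B7
  rw [SimpleGraph.fromRel_adj]
  infer_instance

/-- A linear order on five points has no 4-cycle of cyclically consecutive pairs. -/
theorem no_cyclic_order (L : Fin 9 → Fin 9 → Prop)
    (tr : ∀ x y z, L x y → L y z → L x z) (asym : ∀ x y, L x y → L y x → x = y)
    (tot : ∀ x y : Fin 9, 4 ≤ x → 4 ≤ y → L x y ∨ L y x)
    (B : ∀ a p q x x' : Fin 9, 4 ≤ p → 4 ≤ q → 4 ≤ x → 4 ≤ x' → a < 4 → B7.Adj a p →
      B7.Adj a q → p ≠ q → ¬ B7.Adj a x → ¬ B7.Adj a x' → L p x → L x q →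
      L p x' ∧ L x' q) : False := by
  have T : ∀ x y : Fin 9, (4 ≤ x ∧ 4 ≤ y ∧ x ≠ y) → (L x y ↔ ¬ L y x) := fun x y h =>
    ⟨fun h1 h2 => h.2.2 (asym x y h1 h2), fun h1 => (tot x y h.1 h.2.1).resolve_right h1⟩
  have B' : ∀ a p q x x' : Fin 9, (4 ≤ p ∧ 4 ≤ q ∧ 4 ≤ x ∧ 4 ≤ x' ∧ a < 4 ∧ B7.Adj a p ∧
      B7.Adj a q ∧ p ≠ q ∧ ¬ B7.Adj a x ∧ ¬ B7.Adj a x') → L p x → L x q → L p x' ∧ L x' q :=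
    fun a p q x x' ⟨h1, h2, h3, h4, h5, h6, h7, h8, h9, h10⟩ =>
      B a p q x x' h1 h2 h3 h4 h5 h6 h7 h8 h9 h10
  have t45 := T 5 4 (by decide)
  have t46 := T 6 4 (by decide)
  have t47 := T 7 4 (by decide)
  have t48 := T 8 4 (by decide)
  have t56 := T 6 5 (by decide)
  have t57 := T 7 5 (by decide)
  have t58 := T 8 5 (by decide)
  have t67 := T 7 6 (by decide)
  have t68 := T 8 6 (by decide)
  have t78 := T 8 7 (by decide)
  have r456 := tr 4 5 6
  have s456 := tr 4 6 5
  have u456 := tr 5 4 6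
  have r457 := tr 4 5 7
  have s457 := tr 4 7 5
  have u457 := tr 5 4 7
  have r458 := tr 4 5 8
  have s458 := tr 4 8 5
  have u458 := tr 5 4 8
  have r467 := tr 4 6 7
  have s467 := tr 4 7 6
  have u467 := tr 6 4 7
  have r468 := tr 4 6 8
  have s468 := tr 4 8 6
  have u468 := tr 6 4 8
  have r478 := tr 4 7 8
  have s478 := tr 4 8 7
  have u478 := tr 7 4 8
  have r567 := tr 5 6 7
  have s567 := tr 5 7 6
  have u567 := tr 6 5 7
  have r568 := tr 5 6 8
  have s568 := tr 5 8 6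
  have u568 := tr 6 5 8
  have r578 := tr 5 7 8
  have s578 := tr 5 8 7
  have u578 := tr 7 5 8
  have r678 := tr 6 7 8
  have s678 := tr 6 8 7
  have u678 := tr 7 6 8
  have b050 := B' 0 5 6 4 7 (by decide)
  have b051 := B' 0 5 6 7 8 (by decide)
  have b052 := B' 0 5 6 8 4 (by decide)
  have b060 := B' 0 6 5 4 7 (by decide)
  have b061 := B' 0 6 5 7 8 (by decide)
  have b062 := B' 0 6 5 8 4 (by decide)
  have b150 := B' 1 5 7 4 6 (by decide)
  have b151 := B' 1 5 7 6 8 (by decide)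
  have b152 := B' 1 5 7 8 4 (by decide)
  have b170 := B' 1 7 5 4 6 (by decide)
  have b171 := B' 1 7 5 6 8 (by decide)
  have b172 := B' 1 7 5 8 4 (by decide)
  have b260 := B' 2 6 8 4 5 (by decide)
  have b261 := B' 2 6 8 5 7 (by decide)
  have b262 := B' 2 6 8 7 4 (by decide)
  have b280 := B' 2 8 6 4 5 (by decide)
  have b281 := B' 2 8 6 5 7 (by decide)
  have b282 := B' 2 8 6 7 4 (by decide)
  have b370 := B' 3 7 8 4 5 (by decide)
  have b371 := B' 3 7 8 5 6 (by decide)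
  have b372 := B' 3 7 8 6 4 (by decide)
  have b380 := B' 3 8 7 4 5 (by decide)
  have b381 := B' 3 8 7 5 6 (by decide)
  have b382 := B' 3 8 7 6 4 (by decide)
  clear T B' tr asym tot B
  grind

theorem not_wordRepresentable_B7 : ¬ WordRepresentable B7 := by
  rintro ⟨w, hw, H⟩
  have hG : ∀ x y, x ≠ y → (Ahead w x y ∨ Ahead w y x ↔ B7.Adj x y) := fun x y h => by
    rw [← alternates_iff w x y h]; exact H x y h
  have K : ∀ x y : Fin 9, 4 ≤ x → 4 ≤ y → x ≠ y → B7.Adj x y := by decide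
  refine no_cyclic_order (Lead w) (fun x y z => Lead.trans) (fun x y => Lead.antisymm hw) ?_ ?_
  · intro x y hx hy
    by_cases e : x = y
    · subst e; exact Or.inl (Lead.refl w x)
    · exact ((hG x y e).2 (K x y hx hy e)).imp Ahead.lead Ahead.lead
  · intro a p q x x' hp hq hx hx' ha hap haq hpq nx nx'
    refine between_of_between hw hG a p q x x' hap haq (K p q hp hq hpq)
      (K x' p hx' hp ?_) (K x' q hx' hq ?_) ⟨?_, nx⟩ ⟨?_, nx'⟩
    · rintro rfl; exact nx' hap
    · rintro rfl; exact nx' haq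
    · exact (ha.trans_le hx).ne
    · exact (ha.trans_le hx').ne

/-- A word over `Fin 9` avoiding `v` represents the vertex-deleted subgraph. -/
theorem wordRepresentable_induce (v : Fin 9) (w : List (Fin 9)) (hv : ∀ x ∈ w, x ≠ v)
    (hw : ∀ x, x ≠ v → x ∈ w)
    (h : ∀ x y : Fin 9, x ≠ v → y ≠ v → x ≠ y →
      ((w.filter (fun z => decide (z = x ∨ z = y))).IsChain (· ≠ ·) ↔ B7.Adj x y)) :
    WordRepresentable (B7.induce {x | x ≠ v}) := by
  refine ⟨w.attachWith (· ∈ {x | x ≠ v}) hv, ?_, ?_⟩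
  · rintro ⟨x, hx⟩
    simpa [List.mem_attachWith] using hw x hx
  · rintro ⟨x, hx⟩ ⟨y, hy⟩ hne
    have hxy : x ≠ y := fun e => hne (Subtype.ext e)
    rw [SimpleGraph.comap_adj]
    refine Iff.trans ?_ (h x y hx hy hxy)
    change List.IsChain (· ≠ ·) ((w.attachWith (· ∈ {x | x ≠ v}) hv).filter
          (fun z => decide (z = ⟨x, hx⟩ ∨ z = ⟨y, hy⟩))) ↔ _
    have e : w.filter (fun z => decide (z = x ∨ z = y)) =
        ((w.attachWith (· ∈ {x | x ≠ v}) hv).filter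
          (fun z => decide (z = ⟨x, hx⟩ ∨ z = ⟨y, hy⟩))).map Subtype.val := by
      conv_lhs => rw [← List.attachWith_map_subtype_val (p := (· ∈ {x | x ≠ v})) hv]
      rw [List.filter_map]
      congr 1
      apply List.filter_congr
      rintro ⟨z, hz⟩ -
      simp [Subtype.ext_iff]
    rw [e, List.isChain_map]
    simp only [ne_eq, Subtype.ext_iff]

/-- A word representing `B₇` minus the vertex `v`. -/
def delWord : Fin 9 → List (Fin 9) := ![
  [4, 1, 5, 3, 7, 2, 1, 8, 3, 6, 2],
  [3, 7, 2, 8, 0, 3, 6, 2, 5, 0, 4],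
  [6, 4, 3, 8, 1, 7, 0, 3, 5, 1, 6, 0],
  [1, 5, 7, 4, 2, 8, 0, 1, 6, 2, 5, 0, 7, 1],
  [7, 1, 8, 3, 6, 2, 5, 7, 8, 0, 6, 1, 5, 3, 7],
  [2, 7, 3, 1, 4, 6, 0, 8, 7, 4, 2, 6, 3, 8, 1, 7, 4],
  [2, 8, 4, 0, 1, 5, 3, 2, 0, 7, 1, 8, 3, 2],
  [1, 6, 0, 8, 2, 3, 4, 5, 1, 6, 0, 8, 4, 5, 2, 6, 3, 8, 4],
  [2, 0, 6, 1, 5, 3, 2, 0, 7, 1, 3, 4, 6, 2]]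

set_option maxRecDepth 100000 in
set_option synthInstance.maxHeartbeats 400000 in
set_option synthInstance.maxSize 4000 in
theorem delWord_spec : ∀ v : Fin 9, (∀ x ∈ delWord v, x ≠ v) ∧ (∀ x, x ≠ v → x ∈ delWord v) ∧
    ∀ x y : Fin 9, x ≠ v → y ≠ v → x ≠ y →
      (((delWord v).filter (fun z => decide (z = x ∨ z = y))).IsChain (· ≠ ·) ↔ B7.Adj x y) := by
  decide +kernel

/-- Deleting any vertex of `B₇` yields a word-representable graph; since `B₇` itself is
not word-representable, `B₇` is a minimal non-word-representable graph. -/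
theorem stmt17 :
    (∀ v : Fin 9, WordRepresentable (B7.induce {x | x ≠ v})) ∧ ¬ WordRepresentable B7 := by
  exact ⟨fun v => wordRepresentable_induce v (delWord v) (delWord_spec v).1 (delWord_spec v).2.1
    (delWord_spec v).2.2, not_wordRepresentable_B7⟩
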